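/- arXiv:1402.5739 — 3 statements merged into one kernel-verified Lean document; each statement's English description precedes it below -/
import Mathlib

section
/- For every 3-hypergraph H with nonempty vertex set, the chromatic number of the Mycielski-type 3-hypergraph μ(H) is one more than that of H: χ(μ(H)) = χ(H) + 1. -/
open scoped Classical

/-- A `3`-hypergraph: a finite vertex set together with a finite set of edges,
each edge intended to be a 3-element subset of the vertex set. -/
structure ThreeHypergraph (α : Type*) where
  verts : Finset α
  edges : Finset (Finset α)

namespace ThreeHypergraph

variable {α : Type*}

/-- The structural requirements on a `3`-hypergraph: every edge is a
3-element subset of the vertex set. -/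
def IsValid (H : ThreeHypergraph α) : Prop :=
  ∀ e ∈ H.edges, e.card = 3 ∧ e ⊆ H.verts

/-- A proper colouring with `k` colours: a partition of the vertices into (at most)
`k` colour classes such that no edge is contained in a single class. -/
def ProperColoring (H : ThreeHypergraph α) (k : ℕ) : Prop :=
  ∃ c : α → ℕ, (∀ v ∈ H.verts, c v < k) ∧
    ∀ e ∈ H.edges, ¬ ∃ i : ℕ, ∀ v ∈ e, c v = i

/-- The chromatic number: the least `k` admitting a proper colouring. -/
noncomputable def chromaticNumber (H : ThreeHypergraph α) : ℕ :=
  sInf {k | H.ProperColoring k}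

/-- A clique: a set of vertices all of whose 3-element subsets are edges. -/
def IsClique (H : ThreeHypergraph α) (S : Finset α) : Prop :=
  S ⊆ H.verts ∧ ∀ t ⊆ S, t.card = 3 → t ∈ H.edges

/-- The clique number: the largest cardinality of a clique. -/
noncomputable def cliqueNumber (H : ThreeHypergraph α) : ℕ :=
  sSup {m | ∃ S : Finset α, H.IsClique S ∧ S.card = m}

end ThreeHypergraph

/-- The Mycielski-type `3`-hypergraph `μ(H)`: vertices are two copies of `V(H)`
(encoded as `some (v, 0)` and `some (v, 1)`) together with a new vertex `w = none`;
edges are the triples projecting onto an edge of `H` (`E₁`) together with the triples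
`{(u,1), (u,2), w}` for `u ∈ V(H)` (`E₂`). -/
noncomputable def mycielski {α : Type*} [DecidableEq α] (H : ThreeHypergraph α) :
    ThreeHypergraph (Option (α × Fin 2)) where
  verts := (H.verts ×ˢ (Finset.univ : Finset (Fin 2))).image some ∪ {none}
  edges := (Finset.powersetCard 3
      ((H.verts ×ˢ (Finset.univ : Finset (Fin 2))).image some ∪ {none})).filter
    (fun e =>
      (∃ u₁ u₂ u₃ : α, ∃ t₁ t₂ t₃ : Fin 2, ({u₁, u₂, u₃} : Finset α) ∈ H.edges ∧
        e = {some (u₁, t₁), some (u₂, t₂), some (u₃, t₃)}) ∨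
      (∃ u : α, u ∈ H.verts ∧ e = {some (u, 0), some (u, 1), none}))

/-!
A proper colouring of `H` extends to `μ(H)` by colouring both copies of a vertex alike and giving
`w` a fresh colour. Conversely, in a proper colouring of `μ(H)` the edge `{(u,1), (u,2), w}` forces
some copy of `u` to avoid the colour of `w`. Colouring each `u` like such a copy is proper on `H`,
because every edge of `H` lifts to every choice of copies, and it saves the colour of `w`.
-/

namespace ThreeHypergraph

section Coloring

variable {α β γ : Type*} {H : ThreeHypergraph α} {c : α → β}

/-- A vertex colouring `c`, with colours in an arbitrary type, is proper if no edge is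
monochromatic. Unlike `ProperColoring` it concerns one given map and does not count colours. -/
def IsProper (H : ThreeHypergraph α) (c : α → β) : Prop :=
  ∀ e ∈ H.edges, ¬ ∃ i, ∀ v ∈ e, c v = i

theorem IsValid.isProper_of_injOn (hH : H.IsValid) (hc : Set.InjOn c H.verts) :
    H.IsProper c := by
  rintro e he ⟨i, hi⟩
  obtain ⟨hcard, hsub⟩ := hH e he
  obtain ⟨u, hu, v, hv, huv⟩ : ∃ u ∈ e, ∃ v ∈ e, u ≠ v :=
    Finset.one_lt_card.mp (by simp [hcard])
  exact huv (hc (hsub hu) (hsub hv) ((hi u hu).trans (hi v hv).symm))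

theorem IsProper.comp_injOn (hc : H.IsProper c) (hH : H.IsValid) {f : β → γ}
    (hf : Set.InjOn f (c '' H.verts)) : H.IsProper (f ∘ c) := by
  rintro e he ⟨i, hi⟩
  obtain ⟨hcard, hsub⟩ := hH e he
  obtain ⟨u, hu⟩ : e.Nonempty := Finset.card_pos.mp (by simp [hcard])
  refine hc e he ⟨c u, fun v hv ↦ ?_⟩
  exact hf (Set.mem_image_of_mem c (hsub hv)) (Set.mem_image_of_mem c (hsub hu))
    ((hi v hv).trans (hi u hu).symm)

theorem IsProper.properColoring_card (hc : H.IsProper c) (hH : H.IsValid) {C : Finset β}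
    (hC : Set.MapsTo c H.verts C) : H.ProperColoring C.card := by
  obtain ⟨f, hfC, hf⟩ : ∃ f : β → ℕ, (C : Set β) ⊆ f ⁻¹' (Finset.range C.card : Set ℕ) ∧
      Set.InjOn f C :=
    C.finite_toSet.exists_injOn_of_encard_le <| by
      simp only [Set.encard_coe_eq_coe_finsetCard, Finset.card_range, le_refl]
  refine ⟨f ∘ c, fun v hv ↦ ?_, hc.comp_injOn hH (hf.mono hC.image_subset)⟩
  exact Finset.mem_range.mp (hfC (hC hv))

theorem IsValid.properColoring_card_verts (hH : H.IsValid) : H.ProperColoring H.verts.card :=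
  (hH.isProper_of_injOn (Set.injOn_id _)).properColoring_card hH (Set.mapsTo_id _)

end Coloring

section Mycielski

variable {α β : Type*} [DecidableEq α] {H : ThreeHypergraph α}

theorem none_mem_verts_mycielski : none ∈ (mycielski H).verts := by
  simp [mycielski]

@[simp]
theorem some_mem_verts_mycielski {v : α} {t : Fin 2} :
    some (v, t) ∈ (mycielski H).verts ↔ v ∈ H.verts := by
  simp [mycielski]

theorem isValid_mycielski : (mycielski H).IsValid := fun _ he ↦
  (Finset.mem_powersetCard.mp (Finset.mem_filter.mp he).1).symm

theorem IsValid.image_some_mem_edges_mycielski (hH : H.IsValid) {e : Finset α}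
    (he : e ∈ H.edges) (t : α → Fin 2) :
    e.image (fun v ↦ some (v, t v)) ∈ (mycielski H).edges := by
  obtain ⟨hcard, hsub⟩ := hH e he
  have hinj : Function.Injective fun v ↦ some (v, t v) := fun _ _ huv ↦
    (Prod.mk.inj (Option.some.inj huv)).1
  refine Finset.mem_filter.mpr ⟨Finset.mem_powersetCard.mpr ⟨?_, ?_⟩, Or.inl ?_⟩
  · exact Finset.image_subset_iff.mpr fun v hv ↦ some_mem_verts_mycielski.mpr (hsub hv)
  · rw [Finset.card_image_of_injective e hinj, hcard]
  · obtain ⟨u₁, u₂, u₃, -, -, -, rfl⟩ := Finset.card_eq_three.mp hcard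
    exact ⟨u₁, u₂, u₃, t u₁, t u₂, t u₃, he,
      by simp only [Finset.image_insert, Finset.image_singleton]⟩

theorem copies_insert_none_mem_edges_mycielski {u : α} (hu : u ∈ H.verts) :
    {some (u, 0), some (u, 1), none} ∈ (mycielski H).edges := by
  refine Finset.mem_filter.mpr ⟨Finset.mem_powersetCard.mpr ⟨?_, ?_⟩, Or.inr ⟨u, hu, rfl⟩⟩
  · simp [Finset.insert_subset_iff, hu]
  · exact Finset.card_eq_three.mpr ⟨_, _, _, by simp, by simp, by simp, rfl⟩

theorem IsProper.option_map_comp_fst {c : α → β} (hc : H.IsProper c) :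
    (mycielski H).IsProper (Option.map (c ∘ Prod.fst)) := by
  rintro e he ⟨i, hi⟩
  rcases (Finset.mem_filter.mp he).2 with ⟨u₁, u₂, u₃, t₁, t₂, t₃, hu, rfl⟩ | ⟨u, -, rfl⟩
  · obtain ⟨h₁, h₂, h₃⟩ : some (c u₁) = i ∧ some (c u₂) = i ∧ some (c u₃) = i := by
      simpa using hi
    have h₂₁ : c u₂ = c u₁ := Option.some.inj (h₂.trans h₁.symm)
    have h₃₁ : c u₃ = c u₁ := Option.some.inj (h₃.trans h₁.symm)
    exact hc _ hu ⟨c u₁, by simp [h₂₁, h₃₁]⟩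
  · have hw : some (c u) = none := (hi (some (u, 0)) (by simp)).trans (hi none (by simp)).symm
    exact Option.some_ne_none _ hw

theorem IsProper.comp_some_mk {d : Option (α × Fin 2) → β} (hd : (mycielski H).IsProper d)
    (hH : H.IsValid) (t : α → Fin 2) : H.IsProper fun v ↦ d (some (v, t v)) := by
  rintro e he ⟨i, hi⟩
  exact hd _ (hH.image_some_mem_edges_mycielski he t) ⟨i, Finset.forall_mem_image.mpr hi⟩

theorem IsProper.exists_some_mk_ne_none {d : Option (α × Fin 2) → β}
    (hd : (mycielski H).IsProper d) {u : α} (hu : u ∈ H.verts) :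
    ∃ t, d (some (u, t)) ≠ d none := by
  by_contra! h
  exact hd _ (copies_insert_none_mem_edges_mycielski hu) ⟨d none, by simp [h]⟩

theorem ProperColoring.mycielski_succ {k : ℕ} (h : H.ProperColoring k) :
    (mycielski H).ProperColoring (k + 1) := by
  obtain ⟨c, hck, hc : H.IsProper c⟩ := h
  have hmaps : Set.MapsTo (Option.map (c ∘ Prod.fst))
      ((mycielski H).verts : Set (Option (α × Fin 2))) (Finset.range k).insertNone := by
    rintro (_ | ⟨v, t⟩) hv
    · simp
    · simpa using hck v (some_mem_verts_mycielski.mp hv)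
  simpa using hc.option_map_comp_fst.properColoring_card isValid_mycielski hmaps

theorem IsValid.properColoring_of_mycielski_succ (hH : H.IsValid) {k : ℕ}
    (h : (mycielski H).ProperColoring (k + 1)) : H.ProperColoring k := by
  obtain ⟨d, hdk, hd : (mycielski H).IsProper d⟩ := h
  choose! t ht using fun u (hu : u ∈ H.verts) ↦ hd.exists_some_mk_ne_none hu
  have hmaps : Set.MapsTo (fun v ↦ d (some (v, t v))) H.verts
      ((Finset.range (k + 1)).erase (d none)) := fun v hv ↦
    Finset.mem_erase.mpr
      ⟨ht v hv, Finset.mem_range.mpr (hdk _ (some_mem_verts_mycielski.mpr hv))⟩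
  have hcard : ((Finset.range (k + 1)).erase (d none)).card = k := by
    simp [Finset.card_erase_of_mem, hdk _ none_mem_verts_mycielski]
  exact hcard ▸ (hd.comp_some_mk hH t).properColoring_card hH hmaps

theorem IsValid.properColoring_mycielski_succ_iff (hH : H.IsValid) {k : ℕ} :
    (mycielski H).ProperColoring (k + 1) ↔ H.ProperColoring k :=
  ⟨hH.properColoring_of_mycielski_succ, ProperColoring.mycielski_succ⟩

theorem chromaticNumber_mycielski_pos : 0 < (mycielski H).chromaticNumber := by
  have hmem : (mycielski H).ProperColoring (mycielski H).chromaticNumber :=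
    Nat.sInf_mem (s := {k | (mycielski H).ProperColoring k})
      ⟨_, isValid_mycielski.properColoring_card_verts⟩
  obtain ⟨d, hd, -⟩ := hmem
  exact (Nat.zero_le _).trans_lt (hd none none_mem_verts_mycielski)

end Mycielski

end ThreeHypergraph

/-- For every 3-hypergraph `H` with nonempty vertex set,
`χ(μ(H)) = χ(H) + 1`. -/
theorem chromaticNumber_mycielski {α : Type*} [DecidableEq α] (H : ThreeHypergraph α)
    (hH : H.IsValid) (hne : H.verts.Nonempty) :
    (mycielski H).chromaticNumber = H.chromaticNumber + 1 :=
  calc (mycielski H).chromaticNumber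
      = sInf {k | (mycielski H).ProperColoring (k + 1)} + 1 :=
        (Nat.sInf_add ThreeHypergraph.chromaticNumber_mycielski_pos).symm
    _ = H.chromaticNumber + 1 := by
        simp only [hH.properColoring_mycielski_succ_iff, ThreeHypergraph.chromaticNumber]
end

section
/- Let H be an even 3-hypergraph with at least two vertices and let v ∈ V(H). Then the clique number of H exceeds that of the link graph of v: ω(link_H(v)) + 1 ≤ ω(H). -/
open scoped Classical

/-- A `3`-hypergraph is even if every 4-element subset of its vertex set contains an
even number of edges. -/
def ThreeHypergraph.IsEven {α : Type*} [DecidableEq α] (H : ThreeHypergraph α) : Prop :=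
  ∀ S ⊆ H.verts, S.card = 4 → Even ((H.edges.filter (fun e => e ⊆ S)).card)

/-- The adjacency relation of the link graph `link_H(v)`: `u` and `w` are adjacent iff
`{v, u, w}` is an edge of `H`. -/
def linkAdj {α : Type*} [DecidableEq α] (H : ThreeHypergraph α) (v u w : α) : Prop :=
  u ≠ w ∧ ({v, u, w} : Finset α) ∈ H.edges

/-- The chromatic number of a simple graph given by a vertex set `V` and an adjacency
relation `Adj`: the least number of colours in a proper vertex colouring. -/
noncomputable def graphChromaticNumber {α : Type*} (V : Finset α) (Adj : α → α → Prop) : ℕ :=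
  sInf {k | ∃ c : α → ℕ, (∀ x ∈ V, c x < k) ∧ ∀ u ∈ V, ∀ w ∈ V, Adj u w → c u ≠ c w}

/-- The clique number of a simple graph given by a vertex set `V` and an adjacency
relation `Adj`: the largest cardinality of a set of pairwise adjacent vertices. -/
noncomputable def graphCliqueNumber {α : Type*} (V : Finset α) (Adj : α → α → Prop) : ℕ :=
  sSup {m | ∃ S : Finset α, S ⊆ V ∧ S.card = m ∧ ∀ u ∈ S, ∀ w ∈ S, u ≠ w → Adj u w}

/-!
A clique `S` of the link of `v` gives the clique `insert v S` of `H`. Triples through `v` are edges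
because `S` is a clique of the link. For a triple `t` avoiding `v`, the other three triples of
`insert v t` pass through `v` and are edges, so by evenness `t` cannot be the only non-edge.
-/

theorem exists_card_eq_graphCliqueNumber {α : Type*} (V : Finset α) (Adj : α → α → Prop) :
    ∃ S ⊆ V, S.card = graphCliqueNumber V Adj ∧ (S : Set α).Pairwise Adj := by
  obtain ⟨S, hSV, hcard, hS⟩ : graphCliqueNumber V Adj ∈ {m | ∃ S : Finset α,
      S ⊆ V ∧ S.card = m ∧ ∀ u ∈ S, ∀ w ∈ S, u ≠ w → Adj u w} := by
    refine Nat.sSup_mem ⟨0, ∅, by simp⟩ ⟨V.card, ?_⟩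
    rintro _ ⟨S, hSV, rfl, -⟩
    exact Finset.card_le_card hSV
  exact ⟨S, hSV, hcard, fun u hu w hw => hS u hu w hw⟩

namespace ThreeHypergraph

variable {α : Type*} {H : ThreeHypergraph α}

theorem IsClique.card_le_cliqueNumber {S : Finset α} (hS : H.IsClique S) :
    S.card ≤ H.cliqueNumber := by
  refine le_csSup ⟨H.verts.card, ?_⟩ ⟨S, hS, rfl⟩
  rintro _ ⟨T, hT, rfl⟩
  exact Finset.card_le_card hT.1

variable [DecidableEq α] {v : α} {S t : Finset α}

theorem mem_edges_of_pairwise_linkAdj (hS : (S : Set α).Pairwise (linkAdj H v))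
    (htS : t ⊆ insert v S) (ht : t.card = 3) (hvt : v ∈ t) : t ∈ H.edges := by
  have hcard : (t.erase v).card = 2 := by rw [Finset.card_erase_of_mem hvt, ht]
  obtain ⟨u, w, huw, herase⟩ := Finset.card_eq_two.mp hcard
  have hpair : {u, w} ⊆ S := herase ▸ Finset.subset_insert_iff.mp htS
  have hadj : linkAdj H v u w := hS (hpair (by simp)) (hpair (by simp)) huw
  rw [← Finset.insert_erase hvt, herase]
  exact hadj.2

theorem IsEven.mem_edges_of_forall_ne (heven : H.IsEven) (hH : H.IsValid) {Q : Finset α}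
    (hQ : Q ⊆ H.verts) (hQcard : Q.card = 4) (htQ : t ⊆ Q) (ht : t.card = 3)
    (hedges : ∀ e ⊆ Q, e.card = 3 → e ≠ t → e ∈ H.edges) : t ∈ H.edges := by
  by_contra hnot
  have hfilter : H.edges.filter (fun e => e ⊆ Q) = (Q.powersetCard 3).erase t := by
    ext e
    simp only [Finset.mem_filter, Finset.mem_erase, Finset.mem_powersetCard]
    constructor
    · rintro ⟨he, heQ⟩
      exact ⟨ne_of_mem_of_not_mem he hnot, heQ, (hH e he).1⟩
    · rintro ⟨hne, heQ, hcard⟩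
      exact ⟨hedges e heQ hcard hne, heQ⟩
  have hthree : ((Q.powersetCard 3).erase t).card = 3 := by
    rw [Finset.card_erase_of_mem (Finset.mem_powersetCard.mpr ⟨htQ, ht⟩),
      Finset.card_powersetCard, hQcard]
    rfl
  have heven_three : Even 3 := hthree ▸ hfilter ▸ heven Q hQ hQcard
  exact absurd heven_three (by decide)

theorem IsEven.isClique_insert (heven : H.IsEven) (hH : H.IsValid) (hv : v ∈ H.verts)
    (hSV : S ⊆ H.verts) (hS : (S : Set α).Pairwise (linkAdj H v)) :
    H.IsClique (insert v S) := by
  have hvSV : insert v S ⊆ H.verts := Finset.insert_subset hv hSV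
  refine ⟨hvSV, fun t htS ht => ?_⟩
  by_cases hvt : v ∈ t
  · exact mem_edges_of_pairwise_linkAdj hS htS ht hvt
  have hvtS : insert v t ⊆ insert v S :=
    Finset.insert_subset (Finset.mem_insert_self v S) htS
  have hcard : (insert v t).card = 4 := by rw [Finset.card_insert_of_notMem hvt, ht]
  refine heven.mem_edges_of_forall_ne hH (hvtS.trans hvSV) hcard (Finset.subset_insert v t) ht
    fun e het he hne => mem_edges_of_pairwise_linkAdj hS (het.trans hvtS) he ?_
  by_contra hve
  have hsub : e ⊆ t := (Finset.subset_insert_iff_of_notMem hve).mp het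
  exact hne (Finset.eq_of_subset_of_card_le hsub (ht.trans he.symm).le)

end ThreeHypergraph

/-- For an even 3-hypergraph `H` with at least two vertices and a vertex `v`,
`ω(link_H(v)) + 1 ≤ ω(H)`. -/
theorem link_cliqueNumber_lt {α : Type*} [DecidableEq α] (H : ThreeHypergraph α)
    (hH : H.IsValid) (hcard : 2 ≤ H.verts.card) (heven : H.IsEven)
    (v : α) (hv : v ∈ H.verts) :
    graphCliqueNumber (H.verts.erase v) (linkAdj H v) + 1 ≤ H.cliqueNumber := by
  obtain ⟨S, hSerase, hScard, hS⟩ :=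
    exists_card_eq_graphCliqueNumber (H.verts.erase v) (linkAdj H v)
  obtain ⟨hSV, hvS⟩ := Finset.subset_erase.mp hSerase
  have hclique : H.IsClique (insert v S) := heven.isClique_insert hH hv hSV hS
  calc graphCliqueNumber (H.verts.erase v) (linkAdj H v) + 1
      = (insert v S).card := by rw [Finset.card_insert_of_notMem hvS, hScard]
    _ ≤ H.cliqueNumber := hclique.card_le_cliqueNumber
end

section
/- For all integers q ≥ 2 and r ≥ 1, the winding permutation 3-hypergraph W_{q,r} has clique number ω(W_{q,r}) = q. -/
open scoped Classical

/-- `i < j < k` are in clockwise order with respect to the cyclic permutation `[φ]` of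
`Fin n` if some representative `ψ` of the cyclic equivalence class of `φ` (i.e. some
cyclic shift of `φ`) satisfies `ψ⁻¹ i < ψ⁻¹ j < ψ⁻¹ k`. -/
def Clockwise {n : ℕ} (φ : Equiv.Perm (Fin n)) (i j k : Fin n) : Prop :=
  ∃ m : Fin n, φ.symm i + m < φ.symm j + m ∧ φ.symm j + m < φ.symm k + m

/-- The `3`-hypergraph associated to a cyclic permutation `[φ]` of `{1, …, n}`
(encoded as `Fin n`): its edges are the triples `{i, j, k}` with `i < j < k` in
clockwise order with respect to `[φ]`. -/
noncomputable def cyclicPermHG (n : ℕ) (φ : Equiv.Perm (Fin n)) : ThreeHypergraph (Fin n) where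
  verts := Finset.univ
  edges := (Finset.powersetCard 3 (Finset.univ : Finset (Fin n))).filter
    (fun e => ∃ i j k : Fin n, i < j ∧ j < k ∧ Clockwise φ i j k ∧ e = {i, j, k})

/-- The winding permutation `φ_{q,r}` of `{1, …, n}`, `n = r(q−1)+1`, as a function on
values in `{1, …, n}`: `φ_{q,r}(n) = 1` and, for `1 ≤ i < n` with `i ≡ j (mod r)` and
`1 ≤ j ≤ r`, `φ_{q,r}(i) = 2 + (q−1)(r−j) + (i−j)/r`. -/
def windingFun (q r i : ℕ) : ℕ :=
  if i = r * (q - 1) + 1 then 1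
  else
    let j := if i % r = 0 then r else i % r
    2 + (q - 1) * (r - j) + (i - j) / r

/-!
Write `s = q - 1` and `n = r s + 1`, and count positions and values from `0`, modulo `n`. The value
`v` of the winding permutation sits at position `r v - 1`, so up to a rotation the positions of
`0, …, s` are `0, r, …, r s`, all below `n`: these `q` values form a clique. Conversely, let `u` be
the least element of a clique. For `v` in the clique, both `v - u` and the clockwise distance `p`
from `u` to `v` increase with `v`. Since `p ≡ r (v - u)`, the number `(v - u) + s p` is a multiple
of `n`; it is at most `(s + 1) (n - 1)`, so it takes at most `s + 1 = q` values.
-/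

open Finset

theorem exists_lt_lt_of_card_eq_three {α : Type*} [LinearOrder α] {t : Finset α}
    (ht : #t = 3) : ∃ i j k, i < j ∧ j < k ∧ t = {i, j, k} := by
  let f := t.orderEmbOfFin ht
  refine ⟨f 0, f 1, f 2, f.strictMono (by decide), f.strictMono (by decide), ?_⟩
  rw [← t.image_orderEmbOfFin_univ ht]
  simp [Fin.univ_succ, f]

theorem eq_and_eq_and_eq_of_lt_of_triple_eq {α : Type*} [LinearOrder α] {a b c i j k : α}
    (hab : a < b) (hbc : b < c) (hij : i < j) (hjk : j < k)
    (h : ({a, b, c} : Finset α) = {i, j, k}) : a = i ∧ b = j ∧ c = k := by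
  have ha : a ∈ ({i, j, k} : Finset α) := h ▸ by simp
  have hb : b ∈ ({i, j, k} : Finset α) := h ▸ by simp
  have hc : c ∈ ({i, j, k} : Finset α) := h ▸ by simp
  simp only [mem_insert, mem_singleton] at ha hb hc
  grind

theorem card_le_of_injOn_of_dvd_of_lt_mul {α : Type*} {S : Finset α} {f : α → ℕ} {n m : ℕ}
    (hinj : Set.InjOn f S) (hdvd : ∀ v ∈ S, n ∣ f v) (hlt : ∀ v ∈ S, f v < n * m) : #S ≤ m := by
  have hmaps : Set.MapsTo (fun v => f v / n) S (range m) := fun v hv =>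
    mem_coe.2 (mem_range.2 (Nat.div_lt_of_lt_mul (hlt v hv)))
  have hinj' : Set.InjOn (fun v => f v / n) S := fun v hv w hw h =>
    hinj hv hw ((Nat.div_left_inj (hdvd v hv) (hdvd w hw)).1 h)
  exact (card_le_card_of_injOn _ hmaps hinj').trans_eq (card_range m)

section FinArithmetic

variable {n : ℕ}

theorem sub_lt_sub_of_add_lt_add_of_add_lt_add {a b c m : Fin n}
    (hab : a + m < b + m) (hbc : b + m < c + m) : b - a < c - a := by
  have : NeZero n := ⟨a.pos.ne'⟩
  rw [← add_sub_add_right_eq_sub b a m, ← add_sub_add_right_eq_sub c a m, Fin.lt_def,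
    Fin.sub_val_of_le hab.le, Fin.sub_val_of_le (hab.trans hbc).le]
  exact Nat.sub_lt_sub_right hab.le hbc

variable [NeZero n]

open Fin.CommRing in
theorem val_nsmul_eq_mul_mod (k : ℕ) (a : Fin n) : ((k • a : Fin n) : ℕ) = k * a % n := by
  rw [nsmul_eq_mul, Fin.val_mul, Fin.val_natCast, Nat.mod_mul_mod]

theorem dvd_val_add_mul_val_nsmul {r s : ℕ} (h : n ∣ r * s + 1) (a : Fin n) :
    n ∣ (a : ℕ) + s * (r • a : Fin n) := by
  rw [val_nsmul_eq_mul_mod]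
  refine Nat.modEq_zero_iff_dvd.1 ?_
  calc (a : ℕ) + s * (r * a % n)
      ≡ a + s * (r * a) [MOD n] := ((Nat.mod_modEq _ _).mul_left s).add_left _
    _ = (r * s + 1) * a := by ring
    _ ≡ 0 [MOD n] := Nat.modEq_zero_iff_dvd.2 (h.mul_right _)

end FinArithmetic

theorem Clockwise.symm_sub_lt_symm_sub {n : ℕ} {φ : Equiv.Perm (Fin n)} {i j k : Fin n}
    (h : Clockwise φ i j k) : φ.symm j - φ.symm i < φ.symm k - φ.symm i :=
  let ⟨_, hij, hjk⟩ := h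
  sub_lt_sub_of_add_lt_add_of_add_lt_add hij hjk

section Cliques

variable {n : ℕ} {φ : Equiv.Perm (Fin n)} {S : Finset (Fin n)}

theorem mem_edges_cyclicPermHG_iff {i j k : Fin n} (hij : i < j) (hjk : j < k) :
    {i, j, k} ∈ (cyclicPermHG n φ).edges ↔ Clockwise φ i j k := by
  simp only [cyclicPermHG, mem_filter, mem_powersetCard, subset_univ, true_and]
  constructor
  · rintro ⟨-, a, b, c, hab, hbc, h, heq⟩
    obtain ⟨rfl, rfl, rfl⟩ := eq_and_eq_and_eq_of_lt_of_triple_eq hij hjk hab hbc heq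
    exact h
  · intro h
    exact ⟨card_eq_three.2 ⟨i, j, k, hij.ne, (hij.trans hjk).ne, hjk.ne, rfl⟩,
      i, j, k, hij, hjk, h, rfl⟩

theorem isClique_cyclicPermHG_iff :
    (cyclicPermHG n φ).IsClique S ↔
      ∀ i ∈ S, ∀ j ∈ S, ∀ k ∈ S, i < j → j < k → Clockwise φ i j k := by
  constructor
  · intro hS i hi j hj k hk hij hjk
    refine (mem_edges_cyclicPermHG_iff hij hjk).1 (hS.2 _ ?_ ?_)
    · simp [insert_subset_iff, hi, hj, hk]
    · exact card_eq_three.2 ⟨i, j, k, hij.ne, (hij.trans hjk).ne, hjk.ne, rfl⟩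
  · refine fun h => ⟨subset_univ S, fun t hts ht => ?_⟩
    obtain ⟨i, j, k, hij, hjk, rfl⟩ := exists_lt_lt_of_card_eq_three ht
    simp only [insert_subset_iff, singleton_subset_iff] at hts
    obtain ⟨hi, hj, hk⟩ := hts
    exact (mem_edges_cyclicPermHG_iff hij hjk).2 (h i hi j hj k hk hij hjk)

theorem monotoneOn_symm_sub_of_isClique (hS : (cyclicPermHG n φ).IsClique S) {u : Fin n}
    (hu : IsLeast (S : Set (Fin n)) u) : MonotoneOn (fun v => φ.symm v - φ.symm u) S := by
  have : NeZero n := ⟨u.pos.ne'⟩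
  refine monotoneOn_iff_forall_lt.2 fun v hv w hw hvw => ?_
  obtain rfl | huv := (hu.2 hv).eq_or_lt
  · simp
  · exact (isClique_cyclicPermHG_iff.1 hS u hu.1 v hv w hw huv hvw).symm_sub_lt_symm_sub.le

variable [NeZero n] {r s : ℕ} {c : Fin n}

theorem isClique_Iic_of_symm_eq_nsmul_add (hφ : ∀ v, φ.symm v = r • v + c) (hr : 0 < r)
    {b : Fin n} (hb : r * b < n) : (cyclicPermHG n φ).IsClique (Iic b) := by
  have hval {v : Fin n} (hv : v ≤ b) : ((φ.symm v + -c : Fin n) : ℕ) = r * v := by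
    rw [hφ, add_neg_cancel_right, val_nsmul_eq_mul_mod]
    exact Nat.mod_eq_of_lt ((Nat.mul_le_mul_left r hv).trans_lt hb)
  have hlt {v w : Fin n} (hvw : v < w) (hw : w ≤ b) : φ.symm v + -c < φ.symm w + -c := by
    rw [Fin.lt_def, hval (hvw.le.trans hw), hval hw]
    exact Nat.mul_lt_mul_of_pos_left hvw hr
  refine isClique_cyclicPermHG_iff.2 fun i _ j hj k hk hij hjk => ?_
  exact ⟨-c, hlt hij (mem_Iic.1 hj), hlt hjk (mem_Iic.1 hk)⟩

theorem card_le_of_isClique_of_symm_eq_nsmul_add (hφ : ∀ v, φ.symm v = r • v + c)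
    (hn : n ∣ r * s + 1) (hS : (cyclicPermHG n φ).IsClique S) : #S ≤ s + 1 := by
  obtain rfl | hne := S.eq_empty_or_nonempty
  · simp
  obtain ⟨u, hu⟩ : ∃ u, IsLeast (S : Set (Fin n)) u := ⟨_, S.isLeast_min' hne⟩
  let weight (v : Fin n) : ℕ := (v - u : Fin n) + s * (φ.symm v - φ.symm u : Fin n)
  have weight_strictMonoOn : StrictMonoOn weight S := by
    intro v hv w hw hvw
    have hsub : (v - u : Fin n) < w - u := by
      rw [Fin.lt_def, Fin.sub_val_of_le (hu.2 hv), Fin.sub_val_of_le (hu.2 hw)]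
      exact Nat.sub_lt_sub_right (hu.2 hv) hvw
    have hpos := monotoneOn_symm_sub_of_isClique hS hu hv hw hvw.le
    exact Nat.add_lt_add_of_lt_of_le hsub (Nat.mul_le_mul_left s hpos)
  have dvd_weight (v : Fin n) : n ∣ weight v := by
    have hpos : φ.symm v - φ.symm u = r • (v - u) := by
      rw [hφ, hφ, add_sub_add_right_eq_sub, nsmul_sub]
    simpa only [weight, hpos] using dvd_val_add_mul_val_nsmul hn (v - u)
  have weight_lt (v : Fin n) : weight v < n * (s + 1) :=
    calc weight v < n + s * n := Nat.add_lt_add_of_lt_of_le (v - u).isLt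
          (Nat.mul_le_mul_left s (φ.symm v - φ.symm u).isLt.le)
      _ = n * (s + 1) := by ring
  exact card_le_of_injOn_of_dvd_of_lt_mul weight_strictMonoOn.injOn (fun v _ => dvd_weight v)
    fun v _ => weight_lt v

end Cliques

section Winding

variable {q r : ℕ}

theorem windingFun_mul_add {a j : ℕ} (hj : 0 < j) (hjr : j ≤ r)
    (hne : r * a + j ≠ r * (q - 1) + 1) :
    windingFun q r (r * a + j) = 2 + (q - 1) * (r - j) + a := by
  have hmod : (if (r * a + j) % r = 0 then r else (r * a + j) % r) = j := by
    rw [Nat.mul_add_mod]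
    obtain rfl | hlt := hjr.eq_or_lt
    · simp
    · rw [Nat.mod_eq_of_lt hlt, if_neg hj.ne']
  simp only [windingFun, if_neg hne, hmod, Nat.add_sub_cancel,
    Nat.mul_div_cancel_left a (hj.trans_le hjr)]

theorem mul_windingFun_modEq (hr : 0 < r) {i : ℕ} (hi : 0 < i) :
    r * windingFun q r i ≡ i + r [MOD r * (q - 1) + 1] := by
  by_cases hlast : i = r * (q - 1) + 1
  · simp [windingFun, hlast, Nat.ModEq]
  obtain ⟨a, j, hj, hjr, rfl⟩ : ∃ a j, 0 < j ∧ j ≤ r ∧ i = r * a + j :=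
    ⟨(i - 1) / r, (i - 1) % r + 1, Nat.succ_pos _, Nat.mod_lt _ hr, by
      rw [← add_assoc, Nat.div_add_mod, Nat.sub_add_cancel hi]⟩
  rw [windingFun_mul_add hj hjr hlast]
  obtain ⟨d, rfl⟩ := Nat.exists_eq_add_of_le hjr
  calc (j + d) * (2 + (q - 1) * (j + d - j) + a)
      = (j + d) * a + j + (j + d) + ((j + d) * (q - 1) + 1) * d := by
        rw [Nat.add_sub_cancel_left]; ring
    _ ≡ (j + d) * a + j + (j + d) [MOD (j + d) * (q - 1) + 1] := by simp [Nat.ModEq]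

theorem symm_eq_nsmul_add_neg_one_of_windingFun (hr : 0 < r)
    {φ : Equiv.Perm (Fin (r * (q - 1) + 1))}
    (hφ : ∀ i : Fin (r * (q - 1) + 1), (φ i : ℕ) + 1 = windingFun q r ((i : ℕ) + 1))
    (v : Fin (r * (q - 1) + 1)) : φ.symm v = r • v + -1 := by
  obtain ⟨i, rfl⟩ := φ.surjective v
  rw [Equiv.symm_apply_apply, eq_add_neg_iff_add_eq, eq_comm]
  have hmod : r * (φ i : ℕ) ≡ i + 1 [MOD r * (q - 1) + 1] := by
    refine Nat.ModEq.add_right_cancel' r ?_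
    rw [← Nat.mul_succ, Nat.succ_eq_add_one, hφ]
    exact mul_windingFun_modEq hr (Nat.succ_pos i)
  ext
  rw [val_nsmul_eq_mul_mod, hmod, Fin.val_add, Fin.val_one', Nat.add_mod_mod]

end Winding

/-- For all `q ≥ 2` and `r ≥ 1`, the winding permutation 3-hypergraph `W_{q,r}`
(the 3-hypergraph associated to the cyclic permutation `[φ_{q,r}]` of `{1, …, n}`,
`n = r(q−1)+1`, here encoded on `Fin n` with `i ↦ i+1`) has clique number `q`. -/
theorem cliqueNumber_winding (q r : ℕ) (hq : 2 ≤ q) (hr : 1 ≤ r)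
    (φ : Equiv.Perm (Fin (r * (q - 1) + 1)))
    (hφ : ∀ i : Fin (r * (q - 1) + 1), ((φ i : ℕ) + 1) = windingFun q r ((i : ℕ) + 1)) :
    (cyclicPermHG (r * (q - 1) + 1) φ).cliqueNumber = q := by
  have hsymm := symm_eq_nsmul_add_neg_one_of_windingFun hr hφ
  have hq' : q - 1 + 1 = q := Nat.sub_add_cancel (one_le_two.trans hq)
  let b : Fin (r * (q - 1) + 1) := ⟨q - 1, Nat.lt_succ_of_le (Nat.le_mul_of_pos_left _ hr)⟩
  refine IsGreatest.csSup_eq ⟨⟨Iic b, ?_, ?_⟩, ?_⟩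
  · exact isClique_Iic_of_symm_eq_nsmul_add hsymm hr (Nat.lt_succ_self _)
  · rw [Fin.card_Iic, hq']
  · rintro _ ⟨S, hS, rfl⟩
    exact (card_le_of_isClique_of_symm_eq_nsmul_add hsymm dvd_rfl hS).trans_eq hq'
end
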